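/- Let d ≥ 1, let α = (α_1,…,α_d) be a multi-index with α_j > −1/2 for each j, and let 0 < β_1 < β_2. If a bounded measurable function f on (0,∞)^d satisfies the Laguerre Lipschitz condition of order β_2 with some constant A (i.e., sup_x |∂^{n_2}_t P_t^α f(x)| ≤ A t^{β_2−n_2} for all t > 0, where n_2 is the smallest integer greater than β_2), then there exists a constant A' ≥ 0 such that f satisfies the Laguerre Lipschitz condition of order β_1 with constant A' (i.e., sup_x |∂^{n_1}_t P_t^α f(x)| ≤ A' t^{β_1−n_1} for all t > 0, where n_1 is the smallest integer greater than β_1). In other words, Lip_{β_2}(μ_α) ⊂ Lip_{β_1}(μ_α). -/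

import Mathlib

open MeasureTheory Real Set

noncomputable def besselI (ν z : ℝ) : ℝ :=
  ∑' m : ℕ, (z / 2) ^ (2 * (m : ℝ) + ν) / (Nat.factorial m * Real.Gamma ((m : ℝ) + ν + 1))

/-- The positive orthant `(0,∞)^d`. -/
def posOrthant (d : ℕ) : Set (Fin d → ℝ) := Set.univ.pi fun _ => Set.Ioi 0

/-- The Poisson–Laguerre kernel `p_t^α(x,y)`. -/
noncomputable def plKernel (d : ℕ) (α : Fin d → ℝ) (t : ℝ) (x y : Fin d → ℝ) : ℝ :=
  (1 / (2 * Real.sqrt π)) *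
    ∫ r in Set.Ioo (0 : ℝ) 1,
      (t * Real.exp (t ^ 2 / (4 * Real.log r)) /
          ((1 - r) ^ d * (-Real.log r) ^ ((3 : ℝ) / 2))) *
        (∏ j, (y j / x j) ^ (α j / 2) *
            Real.exp (-((r * x j + y j) / (1 - r)) - α j * Real.log r / 2) *
            besselI (α j) (2 * Real.sqrt (r * x j * y j) / (1 - r))) / r

/-- The Poisson–Laguerre semigroup `P_t^α f`, with the convention `P_0^α f = f`. -/
noncomputable def plP (d : ℕ) (α : Fin d → ℝ) (t : ℝ)
    (f : (Fin d → ℝ) → ℝ) (x : Fin d → ℝ) : ℝ :=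
  if t = 0 then f x else ∫ y in posOrthant d, plKernel d α t x y * f y

/-!
The substitution `r = exp (-1 / v²)` in the subordination integral gives
`P_t f(x) = (t / √π) ∫₀^∞ exp (-t² v² / 4) T_v f(x) dv`, where `T_v` is the Laguerre heat semigroup
at time `1 / v²`. Its kernel is a product of noncentral gamma densities (expanding the Bessel
function displays each factor as a Poisson mixture of gamma densities), so `|T_v f(x)| ≤ M` whenever
`|f| ≤ M`. Hence `P_t f(x)` extends holomorphically in `t` to `Re t² > 0` and is bounded by `√2 M`
on the disc of radius `t / 2` about `t`, and Cauchy's estimates give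
`|∂_t^k P_t f(x)| ≤ C_k t^(-k)`.

Let `n₁ ≤ n₂` be the orders of differentiation for `β₁ ≤ β₂`. The `n₂`-th derivative is at most
`A t^(β₂ - n₂) ≤ A t^(β₁ - n₂)` for `t ≤ 1` and `C t^(-n₂) ≤ C t^(β₁ - n₂)` for `t ≥ 1`. All
derivatives of positive order vanish at infinity, so integrating `n₂ - n₁` times from infinity gives
the bound of order `β₁` on the `n₁`-th derivative.
-/

open Filter Topology

section Decay

variable {E : Type*} [NormedAddCommGroup E] [NormedSpace ℝ E]

theorem norm_le_rpow_of_norm_deriv_le_rpow [CompleteSpace E] {g : ℝ → E} {a B t : ℝ}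
    (ha : 0 < a) (ht : 0 < t) (hg : ∀ s ≥ t, DifferentiableAt ℝ g s)
    (hlim : Tendsto g atTop (𝓝 0)) (hB : ∀ s > t, ‖deriv g s‖ ≤ B * s ^ (-a - 1)) :
    ‖g t‖ ≤ B / a * t ^ (-a) := by
  have hdom : IntegrableOn (fun s => B * s ^ (-a - 1)) (Ioi t) :=
    (integrableOn_Ioi_rpow_of_lt (by linarith) ht).const_mul B
  have hle : ∀ᵐ s ∂volume.restrict (Ioi t), ‖deriv g s‖ ≤ B * s ^ (-a - 1) :=
    ae_restrict_of_forall_mem measurableSet_Ioi hB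
  have hint : IntegrableOn (deriv g) (Ioi t) :=
    hdom.mono' (aestronglyMeasurable_deriv g _) hle
  calc ‖g t‖ = ‖∫ s in Ioi t, deriv g s‖ := by
        rw [integral_Ioi_of_hasDerivAt_of_tendsto' (fun s hs => (hg s hs).hasDerivAt) hint hlim,
          zero_sub, norm_neg]
    _ ≤ ∫ s in Ioi t, B * s ^ (-a - 1) := norm_integral_le_of_norm_le hdom hle
    _ = B / a * t ^ (-a) := by
        rw [integral_const_mul, integral_Ioi_rpow_of_lt (by linarith) ht, sub_add_cancel]
        field_simp

theorem differentiableAt_iteratedDeriv_of_contDiffOn {u : ℝ → E} {s : Set ℝ} (hs : IsOpen s)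
    {n : WithTop ℕ∞} (hu : ContDiffOn ℝ n u s) {j : ℕ} (hj : j < n) {t : ℝ} (ht : t ∈ s) :
    DifferentiableAt ℝ (iteratedDeriv j u) t :=
  ((hu.differentiableOn_iteratedDerivWithin hj hs.uniqueDiffOn).congr
    fun _ hr => (iteratedDerivWithin_of_isOpen hs hr).symm).differentiableAt (hs.mem_nhds ht)

theorem norm_iteratedDeriv_le_rpow_of_add [CompleteSpace E] {u : ℝ → E} {β B : ℝ} {k : ℕ}
    (hk : β < k) (n : ℕ) (hu : ContDiffOn ℝ (k + n : ℕ) u (Ioi 0))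
    (hlim : ∀ j ≥ k, Tendsto (iteratedDeriv j u) atTop (𝓝 0))
    (hB : ∀ t > 0, ‖iteratedDeriv (k + n) u t‖ ≤ B * t ^ (β - (k + n : ℕ))) {t : ℝ}
    (ht : 0 < t) :
    ‖iteratedDeriv k u t‖ ≤ B / (∏ i ∈ Finset.range n, (k + i - β)) * t ^ (β - k) := by
  induction n generalizing B with
  | zero => simpa using hB t ht
  | succ n ih =>
    have ha : 0 < k + n - β := by linarith [n.cast_nonneg (α := ℝ)]
    have hstep : ∀ s > 0, ‖iteratedDeriv (k + n) u s‖ ≤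
        B / (k + n - β) * s ^ (β - (k + n : ℕ)) := fun s hs => by
      rw [show β - (k + n : ℕ) = -(k + n - β) by push_cast; ring]
      refine norm_le_rpow_of_norm_deriv_le_rpow ha hs (fun r hr => ?_)
        (hlim (k + n) (Nat.le_add_right k n)) fun r hr => ?_
      · exact differentiableAt_iteratedDeriv_of_contDiffOn isOpen_Ioi hu
          (by exact_mod_cast Nat.lt_succ_self (k + n)) (hs.trans_le hr)
      · rw [← iteratedDeriv_succ, show -(k + n - β) - 1 = β - (k + (n + 1) : ℕ) by
          push_cast; ring]
        exact hB r (hs.trans hr)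
    rw [Finset.prod_range_succ, mul_comm, ← div_div, div_right_comm, mul_comm]
    exact ih (hu.of_le (by exact_mod_cast Nat.le_succ (k + n))) hstep

theorem le_max_mul_rpow {A C a b c x t : ℝ} (hx : 0 ≤ x) (ht : 0 < t) (hbc : b ≤ c) (hca : c ≤ a)
    (hA : x ≤ A * t ^ a) (hC : x ≤ C * t ^ b) : x ≤ max A C * t ^ c := by
  have hA0 : 0 ≤ A := nonneg_of_mul_nonneg_left (hx.trans hA) (rpow_pos_of_pos ht a)
  have hmax : 0 ≤ max A C := hA0.trans (le_max_left A C)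
  rcases le_total t 1 with h1 | h1
  · calc x ≤ A * t ^ a := hA
      _ ≤ max A C * t ^ c := mul_le_mul (le_max_left A C)
          (rpow_le_rpow_of_exponent_ge ht h1 hca) (by positivity) hmax
  · calc x ≤ C * t ^ b := hC
      _ ≤ max A C * t ^ c := mul_le_mul (le_max_right A C)
          (rpow_le_rpow_of_exponent_le h1 hbc) (by positivity) hmax

theorem norm_iteratedDeriv_le_rpow_of_le [CompleteSpace E] {u : ℝ → E} {β₁ β₂ A : ℝ}
    {C : ℕ → ℝ} {k n : ℕ} (hβ₁ : 0 ≤ β₁) (hβ₁₂ : β₁ ≤ β₂) (hk : β₁ < k)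
    (hu : ContDiffOn ℝ (k + n : ℕ) u (Ioi 0))
    (hC : ∀ j ≥ k, ∀ t > 0, ‖iteratedDeriv j u t‖ ≤ C j / t ^ j)
    (hA : ∀ t > 0, ‖iteratedDeriv (k + n) u t‖ ≤ A * t ^ (β₂ - (k + n : ℕ))) {t : ℝ}
    (ht : 0 < t) :
    ‖iteratedDeriv k u t‖ ≤
      max A (C (k + n)) / (∏ i ∈ Finset.range n, (k + i - β₁)) * t ^ (β₁ - k) := by
  have hk0 : k ≠ 0 := by
    rintro rfl
    exact hβ₁.not_gt (by simpa using hk)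
  refine norm_iteratedDeriv_le_rpow_of_add hk n hu (fun j hj => ?_) (fun s hs => ?_) ht
  · refine squeeze_zero_norm' (eventually_gt_atTop 0 |>.mono fun s hs => hC j hj s hs) ?_
    exact (tendsto_pow_atTop (by omega)).const_div_atTop _
  · refine le_max_mul_rpow (norm_nonneg _) hs (b := -(k + n : ℕ)) (by linarith) (by linarith)
      (hA s hs) ?_
    rw [rpow_neg hs.le, rpow_natCast, ← div_eq_mul_inv]
    exact hC (k + n) (Nat.le_add_right k n) s hs

end Decay

section GaussianAverage

variable {E : Type*} [NormedAddCommGroup E] [NormedSpace ℂ E] {G : ℝ → E} {M : ℝ}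

/-- The average of `G` over the half-line with the Gaussian weight `z / √π * exp (-z² v² / 4)`,
whose total mass is `1` for real `z > 0`. A complex parameter is allowed in order to apply Cauchy's
estimates; the integral is meaningful for bounded `G` when `0 < Re z²`. -/
noncomputable def gaussianAverage (G : ℝ → E) (z : ℂ) : E :=
  (z / √π) • ∫ v in Ioi (0 : ℝ), Complex.exp (-(z ^ 2 / 4) * v ^ 2) • G v

theorem integrableOn_cexp_neg_mul_sq_smul
    (hG : AEStronglyMeasurable G (volume.restrict (Ioi 0)))
    (hM : ∀ᵐ v ∂volume.restrict (Ioi (0 : ℝ)), ‖G v‖ ≤ M) {w : ℂ} (hw : 0 < w.re) :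
    IntegrableOn (fun v : ℝ => Complex.exp (-w * v ^ 2) • G v) (Ioi 0) :=
  (integrable_cexp_neg_mul_sq hw).integrableOn.smul_bdd M hG hM

theorem norm_integral_cexp_neg_mul_sq_smul_le
    (hM : ∀ᵐ v ∂volume.restrict (Ioi (0 : ℝ)), ‖G v‖ ≤ M) {w : ℂ} (hw : 0 < w.re) :
    ‖∫ v in Ioi (0 : ℝ), Complex.exp (-w * v ^ 2) • G v‖ ≤ √(π / w.re) / 2 * M := by
  rw [← integral_gaussian_Ioi, ← integral_mul_const]
  refine norm_integral_le_of_norm_le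
    ((integrable_exp_neg_mul_sq hw).integrableOn.mul_const M) ?_
  filter_upwards [hM] with v hv
  rw [norm_smul, norm_cexp_neg_mul_sq]
  gcongr

theorem differentiableAt_integral_cexp_neg_mul_sq_smul
    (hG : AEStronglyMeasurable G (volume.restrict (Ioi 0)))
    (hM : ∀ᵐ v ∂volume.restrict (Ioi (0 : ℝ)), ‖G v‖ ≤ M) {w : ℂ} (hw : 0 < w.re) :
    DifferentiableAt ℂ
      (fun w : ℂ => ∫ v in Ioi (0 : ℝ), Complex.exp (-w * v ^ 2) • G v) w := by
  have hnhds : {u : ℂ | w.re / 2 < u.re} ∈ 𝓝 w :=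
    (isOpen_lt continuous_const Complex.continuous_re).mem_nhds (half_lt_self hw)
  have hmeas : ∀ u : ℂ, AEStronglyMeasurable (fun v : ℝ => Complex.exp (-u * v ^ 2) • G v)
      (volume.restrict (Ioi 0)) := fun u =>
    (Continuous.aestronglyMeasurable (by fun_prop)).smul hG
  have hmeas' : AEStronglyMeasurable
      (fun v : ℝ => (Complex.exp (-w * v ^ 2) * -(v : ℂ) ^ 2) • G v)
      (volume.restrict (Ioi 0)) := (Continuous.aestronglyMeasurable (by fun_prop)).smul hG
  have hbound : ∀ᵐ v : ℝ ∂volume.restrict (Ioi (0 : ℝ)), ∀ u ∈ {u : ℂ | w.re / 2 < u.re},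
      ‖(Complex.exp (-u * v ^ 2) * -(v : ℂ) ^ 2) • G v‖ ≤
        v ^ (2 : ℝ) * exp (-(w.re / 2) * v ^ 2) * M := by
    filter_upwards [hM] with v hv u (hu : w.re / 2 < u.re)
    rw [norm_smul, norm_mul, norm_cexp_neg_mul_sq, norm_neg, norm_pow, Complex.norm_real,
      norm_eq_abs, sq_abs, rpow_two, mul_comm (exp _)]
    gcongr
  have hderiv : ∀ᵐ v : ℝ ∂volume.restrict (Ioi (0 : ℝ)), ∀ u ∈ {u : ℂ | w.re / 2 < u.re},
      HasDerivAt (fun u : ℂ => Complex.exp (-u * v ^ 2) • G v)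
        ((Complex.exp (-u * v ^ 2) * -(v : ℂ) ^ 2) • G v) u :=
    Eventually.of_forall fun v u _ =>
      HasDerivAt.smul_const
        (by simpa using ((hasDerivAt_id u).neg.mul_const ((v : ℂ) ^ 2)).cexp) (G v)
  exact (hasDerivAt_integral_of_dominated_loc_of_deriv_le hnhds (Eventually.of_forall hmeas)
    (integrableOn_cexp_neg_mul_sq_smul hG hM hw) hmeas' hbound
    ((integrableOn_rpow_mul_exp_neg_mul_sq (half_pos hw) (by norm_num)).mul_const M)
    hderiv).2.differentiableAt

theorem differentiableAt_gaussianAverage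
    (hG : AEStronglyMeasurable G (volume.restrict (Ioi 0)))
    (hM : ∀ᵐ v ∂volume.restrict (Ioi (0 : ℝ)), ‖G v‖ ≤ M) {z : ℂ} (hz : 0 < (z ^ 2).re) :
    DifferentiableAt ℂ (gaussianAverage G) z := by
  have hw : 0 < (z ^ 2 / 4).re := by
    rw [Complex.div_ofNat_re]
    positivity
  have hfactor : DifferentiableAt ℂ (fun z : ℂ => z / (√π : ℂ)) z := by fun_prop
  have hsq : DifferentiableAt ℂ (fun z : ℂ => z ^ 2 / 4) z := by fun_prop
  exact hfactor.smul (DifferentiableAt.comp (f := fun z : ℂ => z ^ 2 / 4) z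
    (differentiableAt_integral_cexp_neg_mul_sq_smul hG hM hw) hsq)

theorem norm_gaussianAverage_le (hM : ∀ᵐ v ∂volume.restrict (Ioi (0 : ℝ)), ‖G v‖ ≤ M) {z : ℂ}
    (hz : 0 < (z ^ 2).re) : ‖gaussianAverage G z‖ ≤ ‖z‖ / √(z ^ 2).re * M := by
  have hre : (z ^ 2 / 4).re = (z ^ 2).re / 4 := Complex.div_ofNat_re _ _
  have hsqrt : √(π / ((z ^ 2).re / 4)) = 2 * √π / √(z ^ 2).re := by
    rw [div_div_eq_mul_div, sqrt_div (by positivity), mul_comm, sqrt_mul zero_le_four,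
      show (4 : ℝ) = 2 ^ 2 by norm_num, sqrt_sq zero_le_two]
  rw [gaussianAverage, norm_smul, norm_div, Complex.norm_real, norm_of_nonneg (sqrt_nonneg π)]
  calc ‖z‖ / √π * ‖∫ v in Ioi (0 : ℝ), Complex.exp (-(z ^ 2 / 4) * v ^ 2) • G v‖
      ≤ ‖z‖ / √π * (√(π / ((z ^ 2).re / 4)) / 2 * M) := by
        gcongr
        rw [← hre]
        exact norm_integral_cexp_neg_mul_sq_smul_le hM (by rw [hre]; positivity)
    _ = ‖z‖ / √(z ^ 2).re * M := by
        rw [hsqrt]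
        field_simp

-- On this disc `|arg z| ≤ π / 6`, so `cos (2 * arg z) ≥ 1 / 2`.
theorem norm_sq_le_two_mul_re_sq_of_mem_closedBall {t : ℝ} {z : ℂ}
    (hz : z ∈ Metric.closedBall (t : ℂ) (t / 2)) : ‖z‖ ^ 2 ≤ 2 * (z ^ 2).re := by
  have h : ‖z - t‖ ^ 2 ≤ (t / 2) ^ 2 :=
    pow_le_pow_left₀ (norm_nonneg _) (mem_closedBall_iff_norm.1 hz) 2
  rw [Complex.sq_norm, Complex.normSq_apply] at h ⊢
  simp only [Complex.sub_re, Complex.ofReal_re, Complex.sub_im, Complex.ofReal_im, sub_zero] at h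
  rw [pow_two z, Complex.mul_re]
  nlinarith [sq_nonneg (2 * z.re - 3 / 2 * t)]

theorem re_sq_pos_of_mem_closedBall {t : ℝ} (ht : 0 < t) {z : ℂ}
    (hz : z ∈ Metric.closedBall (t : ℂ) (t / 2)) : 0 < (z ^ 2).re := by
  have hz0 : z ≠ 0 := by
    rintro rfl
    have : t ≤ t / 2 := by simpa [abs_of_pos ht] using hz
    linarith
  have : 0 < ‖z‖ ^ 2 := by positivity
  linarith [norm_sq_le_two_mul_re_sq_of_mem_closedBall hz]

theorem norm_gaussianAverage_le_of_mem_closedBall (hM0 : 0 ≤ M)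
    (hM : ∀ᵐ v ∂volume.restrict (Ioi (0 : ℝ)), ‖G v‖ ≤ M) {t : ℝ} (ht : 0 < t) {z : ℂ}
    (hz : z ∈ Metric.closedBall (t : ℂ) (t / 2)) : ‖gaussianAverage G z‖ ≤ √2 * M := by
  have hre := re_sq_pos_of_mem_closedBall ht hz
  refine (norm_gaussianAverage_le hM hre).trans (mul_le_mul_of_nonneg_right ?_ hM0)
  rw [div_le_iff₀ (sqrt_pos.2 hre), ← sqrt_mul zero_le_two]
  exact le_sqrt_of_sq_le (norm_sq_le_two_mul_re_sq_of_mem_closedBall hz)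

variable [CompleteSpace E]

theorem analyticAt_gaussianAverage (hG : AEStronglyMeasurable G (volume.restrict (Ioi 0)))
    (hM : ∀ᵐ v ∂volume.restrict (Ioi (0 : ℝ)), ‖G v‖ ≤ M) {z : ℂ} (hz : 0 < (z ^ 2).re) :
    AnalyticAt ℂ (gaussianAverage G) z := by
  have hopen : IsOpen {z : ℂ | 0 < (z ^ 2).re} := isOpen_lt continuous_const (by fun_prop)
  exact DifferentiableOn.analyticAt (fun w hw =>
    (differentiableAt_gaussianAverage hG hM hw).differentiableWithinAt) (hopen.mem_nhds hz)

theorem norm_iteratedDeriv_gaussianAverage_le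
    (hG : AEStronglyMeasurable G (volume.restrict (Ioi 0)))
    (hM : ∀ᵐ v ∂volume.restrict (Ioi (0 : ℝ)), ‖G v‖ ≤ M) (k : ℕ) {t : ℝ} (ht : 0 < t) :
    ‖iteratedDeriv k (gaussianAverage G) t‖ ≤ k.factorial * (√2 * M) / (t / 2) ^ k := by
  have hM0 : 0 ≤ M := by
    have : NeZero (volume.restrict (Ioi (0 : ℝ))) := ⟨by simp⟩
    obtain ⟨v, hv⟩ := hM.exists
    exact (norm_nonneg _).trans hv
  refine Complex.norm_iteratedDeriv_le_of_forall_mem_sphere_norm_le k (half_pos ht) ?_ fun z hz =>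
    norm_gaussianAverage_le_of_mem_closedBall hM0 hM ht (Metric.sphere_subset_closedBall hz)
  refine DifferentiableOn.diffContOnCl fun z hz => ?_
  rw [closure_ball _ (half_pos ht).ne'] at hz
  exact (differentiableAt_gaussianAverage hG hM
    (re_sq_pos_of_mem_closedBall ht hz)).differentiableWithinAt

end GaussianAverage

theorem re_ofReal_sq_pos {t : ℝ} (ht : t ≠ 0) : 0 < ((t : ℂ) ^ 2).re := by
  rw [← Complex.ofReal_pow, Complex.ofReal_re]
  positivity

theorem re_gaussianAverage_ofReal (G : ℝ → ℝ) (t : ℝ) :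
    (gaussianAverage (fun v => (G v : ℂ)) t).re =
      t / √π * ∫ v in Ioi (0 : ℝ), exp (-(t ^ 2 / 4) * v ^ 2) * G v := by
  suffices h : gaussianAverage (fun v => (G v : ℂ)) t =
      (t / √π * ∫ v in Ioi (0 : ℝ), exp (-(t ^ 2 / 4) * v ^ 2) * G v : ℝ) by
    rw [h, Complex.ofReal_re]
  simp only [gaussianAverage, smul_eq_mul]
  push_cast
  rw [← integral_complex_ofReal]
  push_cast
  rfl

theorem iteratedDeriv_re_ofReal {U : ℂ → ℂ} {t : ℝ} (hU : AnalyticAt ℂ U t) (k : ℕ) :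
    iteratedDeriv k (fun s : ℝ => (U s).re) t = (iteratedDeriv k U t).re := by
  induction k generalizing t with
  | zero => simp only [iteratedDeriv_zero]
  | succ k ih =>
    have hev : iteratedDeriv k (fun s : ℝ => (U s).re) =ᶠ[𝓝 t]
        fun s : ℝ => (iteratedDeriv k U s).re :=
      (Complex.continuous_ofReal.continuousAt.eventually hU.eventually_analyticAt).mono
        fun _ hs => ih hs
    have hd : DifferentiableAt ℂ (iteratedDeriv k U) t := by
      rw [iteratedDeriv_eq_iterate]
      exact (hU.iterated_deriv k).differentiableAt
    rw [iteratedDeriv_succ, iteratedDeriv_succ, hev.deriv_eq]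
    exact hd.hasDerivAt.real_of_complex.deriv

section ReGaussianAverage

variable {G : ℝ → ℂ} {M : ℝ}

theorem contDiffOn_re_gaussianAverage (hG : AEStronglyMeasurable G (volume.restrict (Ioi 0)))
    (hM : ∀ᵐ v ∂volume.restrict (Ioi (0 : ℝ)), ‖G v‖ ≤ M) (n : WithTop ℕ∞) :
    ContDiffOn ℝ n (fun t : ℝ => (gaussianAverage G t).re) (Ioi 0) := fun _ ht =>
  (analyticAt_gaussianAverage hG hM
    (re_ofReal_sq_pos (ne_of_gt ht))).re_ofReal.contDiffAt.contDiffWithinAt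

theorem abs_iteratedDeriv_re_gaussianAverage_le
    (hG : AEStronglyMeasurable G (volume.restrict (Ioi 0)))
    (hM : ∀ᵐ v ∂volume.restrict (Ioi (0 : ℝ)), ‖G v‖ ≤ M) (k : ℕ) {t : ℝ} (ht : 0 < t) :
    |iteratedDeriv k (fun s : ℝ => (gaussianAverage G s).re) t| ≤
      k.factorial * (√2 * M) / (t / 2) ^ k := by
  rw [iteratedDeriv_re_ofReal (analyticAt_gaussianAverage hG hM (re_ofReal_sq_pos ht.ne'))]
  exact (Complex.abs_re_le_norm _).trans (norm_iteratedDeriv_gaussianAverage_le hG hM k ht)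

end ReGaussianAverage

/-- The density, in the variable `r = exp (-s)`, of the one-half stable subordinator at time `t`,
up to the normalization `1 / (2 * √π)`. Averaging a heat semigroup at time `s = -log r` against it
gives the corresponding Poisson semigroup at time `t`. -/
noncomputable def subordinationDensity (t r : ℝ) : ℝ :=
  t * exp (t ^ 2 / (4 * log r)) / (-log r) ^ ((3 : ℝ) / 2) / r

theorem image_exp_neg_inv_sq_Ioi : (fun v : ℝ => exp (-(v ^ 2)⁻¹)) '' Ioi 0 = Ioo 0 1 := by
  ext r
  constructor
  · rintro ⟨v, hv : 0 < v, rfl⟩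
    exact ⟨exp_pos _, exp_lt_one_iff.2 (neg_lt_zero.2 (by positivity))⟩
  · rintro ⟨h0, h1⟩
    have hlog : 0 < -log r := neg_pos.2 (log_neg h0 h1)
    refine ⟨√((-log r)⁻¹), sqrt_pos.2 (inv_pos.2 hlog), ?_⟩
    beta_reduce
    rw [sq_sqrt (inv_pos.2 hlog).le, inv_inv, neg_neg, exp_log h0]

theorem injOn_exp_neg_inv_sq : InjOn (fun v : ℝ => exp (-(v ^ 2)⁻¹)) (Ioi 0) :=
  fun _ hv _ hw h => (sq_eq_sq₀ (le_of_lt hv) (le_of_lt hw)).1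
    (inv_injective (neg_injective (exp_injective h)))

theorem hasDerivAt_exp_neg_inv_sq {v : ℝ} (hv : v ≠ 0) :
    HasDerivAt (fun v : ℝ => exp (-(v ^ 2)⁻¹)) (exp (-(v ^ 2)⁻¹) * (2 / v ^ 3)) v := by
  refine (((hasDerivAt_pow 2 v).fun_inv (pow_ne_zero 2 hv)).fun_neg.exp).congr_deriv ?_
  field_simp
  norm_num [mul_comm]

theorem abs_deriv_mul_subordinationDensity (t : ℝ) {v : ℝ} (hv : 0 < v) :
    |exp (-(v ^ 2)⁻¹) * (2 / v ^ 3)| * subordinationDensity t (exp (-(v ^ 2)⁻¹)) =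
      2 * t * exp (-(t ^ 2 / 4) * v ^ 2) := by
  have hpow : ((v ^ 2)⁻¹) ^ ((3 : ℝ) / 2) = (v ^ 3)⁻¹ := by
    rw [inv_rpow (sq_nonneg v), ← rpow_natCast v 2, ← rpow_mul hv.le, ← rpow_natCast v 3]
    norm_num
  have hexp : t ^ 2 / (4 * -(v ^ 2)⁻¹) = -(t ^ 2 / 4) * v ^ 2 := by field_simp
  rw [abs_of_pos (by positivity), subordinationDensity, log_exp, neg_neg, hpow, hexp]
  field_simp

theorem integrableOn_subordinationDensity {t : ℝ} (ht : t ≠ 0) :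
    IntegrableOn (subordinationDensity t) (Ioo 0 1) := by
  rw [← image_exp_neg_inv_sq_Ioi, integrableOn_image_iff_integrableOn_abs_deriv_smul
    measurableSet_Ioi (fun v hv => (hasDerivAt_exp_neg_inv_sq (ne_of_gt hv)).hasDerivWithinAt)
    injOn_exp_neg_inv_sq]
  exact ((integrable_exp_neg_mul_sq (by positivity)).const_mul _).integrableOn.congr_fun
    (fun v hv => (abs_deriv_mul_subordinationDensity t hv).symm) measurableSet_Ioi

theorem integral_subordinationDensity_mul (t : ℝ) (H : ℝ → ℝ) :
    ∫ r in Ioo (0 : ℝ) 1, subordinationDensity t r * H r =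
      2 * t * ∫ v in Ioi (0 : ℝ), exp (-(t ^ 2 / 4) * v ^ 2) * H (exp (-(v ^ 2)⁻¹)) := by
  rw [← image_exp_neg_inv_sq_Ioi, integral_image_eq_integral_abs_deriv_smul
    measurableSet_Ioi (fun v hv => (hasDerivAt_exp_neg_inv_sq (ne_of_gt hv)).hasDerivWithinAt)
    injOn_exp_neg_inv_sq, ← integral_const_mul]
  refine setIntegral_congr_fun measurableSet_Ioi fun v hv => ?_
  rw [smul_eq_mul, ← mul_assoc, abs_deriv_mul_subordinationDensity t hv, mul_assoc]

theorem measurable_subordinationDensity (t : ℝ) : Measurable (subordinationDensity t) := by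
  unfold subordinationDensity
  fun_prop

theorem integral_integral_subordinationDensity_mul_swap {Y : Type*} [MeasurableSpace Y]
    {μ : Measure Y} [SFinite μ] {F : ℝ → Y → ℝ} {M : ℝ}
    (hF : AEStronglyMeasurable (Function.uncurry F) ((volume.restrict (Ioo 0 1)).prod μ))
    (hint : ∀ r ∈ Ioo (0 : ℝ) 1, Integrable (F r) μ)
    (hM : ∀ r ∈ Ioo (0 : ℝ) 1, ∫ y, ‖F r y‖ ∂μ ≤ M) {t : ℝ} (ht : t ≠ 0) :
    ∫ y, (∫ r in Ioo (0 : ℝ) 1, subordinationDensity t r * F r y) ∂μ =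
      ∫ r in Ioo (0 : ℝ) 1, subordinationDensity t r * (∫ y, F r y ∂μ) := by
  have hmeas : AEStronglyMeasurable
      (Function.uncurry fun r y => subordinationDensity t r * F r y)
      ((volume.restrict (Ioo 0 1)).prod μ) :=
    ((measurable_subordinationDensity t).comp measurable_fst).aestronglyMeasurable.mul hF
  have hprod : Integrable (Function.uncurry fun r y => subordinationDensity t r * F r y)
      ((volume.restrict (Ioo 0 1)).prod μ) := by
    refine (integrable_prod_iff hmeas).2 ⟨?_, ?_⟩
    · exact ae_restrict_of_forall_mem measurableSet_Ioo fun r hr =>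
        (hint r hr).const_mul (subordinationDensity t r)
    · refine ((integrableOn_subordinationDensity ht).norm.mul_const M).mono'
        hmeas.norm.integral_prod_right' ?_
      refine ae_restrict_of_forall_mem measurableSet_Ioo fun r hr => ?_
      rw [norm_of_nonneg (integral_nonneg fun _ => norm_nonneg _)]
      simp only [Function.uncurry_apply_pair, norm_mul, integral_const_mul]
      exact mul_le_mul_of_nonneg_left (hM r hr) (norm_nonneg _)
  rw [← integral_integral_swap hprod]
  simp only [integral_const_mul]

section NoncentralGamma

/-- The density at `y` of the noncentral gamma distribution of rate `κ` and shape `a + 1`: the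
mixture of the gamma densities of shape `m + a + 1` over a Poisson variable `m` of mean `l`.
It is extended-nonnegative so that the mixture can be integrated termwise. -/
noncomputable def noncentralGammaPDF (a κ l y : ℝ) : ENNReal :=
  ∑' m : ℕ, ENNReal.ofReal (exp (-l) * l ^ m / m.factorial) *
    ProbabilityTheory.gammaPDF (m + a + 1) κ y

theorem measurable_noncentralGammaPDF {Ω : Type*} [MeasurableSpace Ω] (a : ℝ) {κ l y : Ω → ℝ}
    (hκ : Measurable κ) (hl : Measurable l) (hy : Measurable y) :
    Measurable fun ω => noncentralGammaPDF a (κ ω) (l ω) (y ω) := by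
  refine Measurable.tsum fun m => Measurable.fun_mul (by fun_prop) ?_
  exact (Measurable.ite (measurableSet_le measurable_const hy) (by fun_prop)
    measurable_const).ennreal_ofReal

theorem setLIntegral_Ioi_gammaPDF {s κ : ℝ} (hs : 0 < s) (hκ : 0 < κ) :
    ∫⁻ y in Ioi 0, ProbabilityTheory.gammaPDF s κ y = 1 := by
  rw [setLIntegral_congr Ioi_ae_eq_Ici, setLIntegral_eq_of_support_subset,
    ProbabilityTheory.lintegral_gammaPDF_eq_one hs hκ]
  exact fun y hy => not_lt.1 fun h => hy (ProbabilityTheory.gammaPDF_of_neg h)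

theorem setLIntegral_Ioi_noncentralGammaPDF {a κ l : ℝ} (ha : -1 < a) (hκ : 0 < κ) (hl : 0 ≤ l) :
    ∫⁻ y in Ioi 0, noncentralGammaPDF a κ l y = 1 := by
  have hshape : ∀ m : ℕ, 0 < m + a + 1 := fun m => by linarith [m.cast_nonneg (α := ℝ)]
  have hmeas : ∀ m : ℕ, Measurable (ProbabilityTheory.gammaPDF (m + a + 1) κ) := fun m =>
    (ProbabilityTheory.measurable_gammaPDFReal _ _).ennreal_ofReal
  have hpoisson : HasSum (fun m : ℕ => exp (-l) * l ^ m / m.factorial) 1 :=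
    ProbabilityTheory.hasSum_one_poissonMeasure ⟨l, hl⟩
  simp only [noncentralGammaPDF]
  rw [lintegral_tsum fun m => ((hmeas m).const_mul _).aemeasurable]
  simp only [lintegral_const_mul _ (hmeas _), setLIntegral_Ioi_gammaPDF (hshape _) hκ, mul_one]
  rw [← ENNReal.ofReal_tsum_of_nonneg (fun m => by positivity) hpoisson.summable,
    hpoisson.tsum_eq, ENNReal.ofReal_one]

theorem rpow_mul_sqrt_mul_rpow {l w : ℝ} (hl : 0 < l) (hw : 0 < w) (a : ℝ) (m : ℕ) :
    (w / l) ^ (a / 2) * √(l * w) ^ (2 * m + a) = l ^ m * w ^ (m + a) := by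
  have hsqrt : √(l * w) ^ (2 * m + a) = (l ^ m * l ^ (a / 2)) * w ^ (m + a / 2) := by
    rw [sqrt_eq_rpow, ← rpow_mul (by positivity), show 1 / 2 * (2 * m + a) = m + a / 2 by ring,
      mul_rpow hl.le hw.le, rpow_add hl, rpow_natCast]
  rw [hsqrt, div_rpow hw.le hl.le, show (m : ℝ) + a = a / 2 + (m + a / 2) by ring,
    rpow_add hw (a / 2)]
  field_simp

theorem toReal_noncentralGammaPDF {a κ l y : ℝ} (ha : -1 < a) (hκ : 0 < κ) (hl : 0 < l)
    (hy : 0 < y) :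
    (noncentralGammaPDF a κ l y).toReal =
      κ * exp (-(l + κ * y)) * ((κ * y / l) ^ (a / 2) * besselI a (2 * √(l * (κ * y)))) := by
  have hfinite : ∀ m : ℕ, ProbabilityTheory.gammaPDF (m + a + 1) κ y ≠ ⊤ := fun _ =>
    ENNReal.ofReal_ne_top
  rw [noncentralGammaPDF, besselI, ← tsum_mul_left, ← tsum_mul_left, ENNReal.tsum_toReal_eq
    fun m => ENNReal.mul_ne_top ENNReal.ofReal_ne_top (hfinite m)]
  refine tsum_congr fun m => ?_
  have hshape : 0 < m + a + 1 := by linarith [m.cast_nonneg (α := ℝ)]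
  have hκy : κ ^ (m + a + 1) * y ^ (m + a) = κ * (κ * y) ^ (m + a) := by
    rw [mul_rpow hκ.le hy.le, rpow_add_one hκ.ne']
    ring
  rw [ENNReal.toReal_mul, ENNReal.toReal_ofReal (by positivity),
    ProbabilityTheory.gammaPDF, ENNReal.toReal_ofReal
      (ProbabilityTheory.gammaPDFReal_nonneg hshape hκ y), ProbabilityTheory.gammaPDFReal,
    if_pos hy.le, add_sub_cancel_right, mul_div_cancel_left₀ _ two_ne_zero, ← mul_div_assoc,
    rpow_mul_sqrt_mul_rpow hl (mul_pos hκ hy), neg_add, Real.exp_add]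
  linear_combination (exp (-l) * l ^ m / m.factorial * exp (-(κ * y)) / Gamma (m + a + 1)) * hκy

theorem integrableOn_toReal_noncentralGammaPDF {a κ l : ℝ} (ha : -1 < a) (hκ : 0 < κ)
    (hl : 0 ≤ l) : IntegrableOn (fun y => (noncentralGammaPDF a κ l y).toReal) (Ioi 0) :=
  integrable_toReal_of_lintegral_ne_top
    (measurable_noncentralGammaPDF a measurable_const measurable_const measurable_id).aemeasurable
    (by simp [setLIntegral_Ioi_noncentralGammaPDF ha hκ hl])

theorem integral_Ioi_toReal_noncentralGammaPDF {a κ l : ℝ} (ha : -1 < a) (hκ : 0 < κ)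
    (hl : 0 ≤ l) : ∫ y in Ioi 0, (noncentralGammaPDF a κ l y).toReal = 1 := by
  have hmeas : Measurable (noncentralGammaPDF a κ l) :=
    measurable_noncentralGammaPDF a measurable_const measurable_const measurable_id
  have hlint := setLIntegral_Ioi_noncentralGammaPDF ha hκ hl
  rw [integral_toReal hmeas.aemeasurable (ae_lt_top hmeas (by simp [hlint])), hlint,
    ENNReal.toReal_one]

end NoncentralGamma

section LaguerreHeat

variable {d : ℕ} {α x : Fin d → ℝ}

/-- The integral kernel, with respect to Lebesgue measure, of the Laguerre heat semigroup at
time `-log r`. -/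
noncomputable def laguerreHeatKernel (α : Fin d → ℝ) (r : ℝ) (x y : Fin d → ℝ) : ℝ :=
  ∏ j, (noncentralGammaPDF (α j) (1 / (1 - r)) (r * x j / (1 - r)) (y j)).toReal

theorem laguerreHeatKernel_nonneg (α : Fin d → ℝ) (r : ℝ) (x y : Fin d → ℝ) :
    0 ≤ laguerreHeatKernel α r x y :=
  Finset.prod_nonneg fun _ _ => ENNReal.toReal_nonneg

theorem measurable_laguerreHeatKernel (α x : Fin d → ℝ) :
    Measurable fun p : ℝ × (Fin d → ℝ) => laguerreHeatKernel α p.1 x p.2 :=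
  Finset.measurable_fun_prod _ fun j _ =>
    (measurable_noncentralGammaPDF (α j) (by fun_prop) (by fun_prop)
      (by fun_prop)).ennreal_toReal

theorem toReal_noncentralGammaPDF_laguerre {a r ξ y : ℝ} (ha : -1 < a) (hr : r ∈ Ioo (0 : ℝ) 1)
    (hξ : 0 < ξ) (hy : 0 < y) :
    (noncentralGammaPDF a (1 / (1 - r)) (r * ξ / (1 - r)) y).toReal =
      (y / ξ) ^ (a / 2) * exp (-((r * ξ + y) / (1 - r)) - a * log r / 2) *
        besselI a (2 * √(r * ξ * y) / (1 - r)) / (1 - r) := by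
  obtain ⟨hr0, hr1⟩ := hr
  have hq : 0 < 1 - r := sub_pos.2 hr1
  have hpow : (1 / (1 - r) * y / (r * ξ / (1 - r))) ^ (a / 2) =
      (y / ξ) ^ (a / 2) * exp (-(a * log r / 2)) := by
    rw [show 1 / (1 - r) * y / (r * ξ / (1 - r)) = y / ξ / r by field_simp,
      div_rpow (by positivity) hr0.le, div_eq_mul_inv, ← rpow_neg hr0.le, rpow_def_of_pos hr0]
    ring_nf
  have harg : 2 * √(r * ξ / (1 - r) * (1 / (1 - r) * y)) = 2 * √(r * ξ * y) / (1 - r) := by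
    rw [show r * ξ / (1 - r) * (1 / (1 - r) * y) = r * ξ * y / (1 - r) ^ 2 by field_simp,
      sqrt_div' _ (sq_nonneg _), sqrt_sq hq.le, mul_div_assoc]
  have hexp : exp (-((r * ξ + y) / (1 - r)) - a * log r / 2) =
      exp (-(r * ξ / (1 - r) + 1 / (1 - r) * y)) * exp (-(a * log r / 2)) := by
    rw [← Real.exp_add]
    ring_nf
  rw [toReal_noncentralGammaPDF ha (one_div_pos.2 hq) (by positivity) hy, hpow, harg, hexp]
  ring

theorem laguerreHeatKernel_eq (hα : ∀ j, -1 < α j) {r : ℝ} (hr : r ∈ Ioo (0 : ℝ) 1)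
    (hx : x ∈ posOrthant d) {y : Fin d → ℝ} (hy : y ∈ posOrthant d) :
    laguerreHeatKernel α r x y =
      (∏ j, (y j / x j) ^ (α j / 2) *
        exp (-((r * x j + y j) / (1 - r)) - α j * log r / 2) *
        besselI (α j) (2 * √(r * x j * y j) / (1 - r))) / (1 - r) ^ d := by
  rw [laguerreHeatKernel, Finset.prod_congr rfl fun j _ =>
    toReal_noncentralGammaPDF_laguerre (hα j) hr (hx j trivial) (hy j trivial),
    Finset.prod_div_distrib, Finset.prod_const, Finset.card_fin]

theorem plKernel_eq_integral_laguerreHeatKernel (hα : ∀ j, -1 < α j) (hx : x ∈ posOrthant d)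
    {y : Fin d → ℝ} (hy : y ∈ posOrthant d) (t : ℝ) :
    plKernel d α t x y = 1 / (2 * √π) *
      ∫ r in Ioo (0 : ℝ) 1, subordinationDensity t r * laguerreHeatKernel α r x y := by
  rw [plKernel]
  congr 1
  refine setIntegral_congr_fun measurableSet_Ioo fun r hr => ?_
  rw [laguerreHeatKernel_eq hα hr hx hy, subordinationDensity]
  ring

theorem volume_restrict_posOrthant (d : ℕ) :
    (volume : Measure (Fin d → ℝ)).restrict (posOrthant d) =
      Measure.pi fun _ => (volume : Measure ℝ).restrict (Ioi 0) := by
  rw [posOrthant, volume_pi, Measure.restrict_pi_pi]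

theorem measurableSet_posOrthant (d : ℕ) : MeasurableSet (posOrthant d) :=
  MeasurableSet.univ_pi fun _ => measurableSet_Ioi

theorem integrableOn_laguerreHeatKernel (hα : ∀ j, -1 < α j) {r : ℝ} (hr : r ∈ Ioo (0 : ℝ) 1)
    (hx : x ∈ posOrthant d) : IntegrableOn (laguerreHeatKernel α r x) (posOrthant d) := by
  have hq : 0 < 1 - r := sub_pos.2 hr.2
  rw [IntegrableOn, volume_restrict_posOrthant]
  exact Integrable.fintype_prod fun j => integrableOn_toReal_noncentralGammaPDF (hα j)
    (one_div_pos.2 hq) (div_nonneg (mul_nonneg hr.1.le (le_of_lt (hx j trivial))) hq.le)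

theorem integral_laguerreHeatKernel (hα : ∀ j, -1 < α j) {r : ℝ} (hr : r ∈ Ioo (0 : ℝ) 1)
    (hx : x ∈ posOrthant d) : ∫ y in posOrthant d, laguerreHeatKernel α r x y = 1 := by
  have hq : 0 < 1 - r := sub_pos.2 hr.2
  rw [volume_restrict_posOrthant]
  simp only [laguerreHeatKernel]
  rw [integral_fintype_prod_eq_prod (fun j y =>
    (noncentralGammaPDF (α j) (1 / (1 - r)) (r * x j / (1 - r)) y).toReal)]
  exact Finset.prod_eq_one fun j _ => integral_Ioi_toReal_noncentralGammaPDF (hα j)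
    (one_div_pos.2 hq) (div_nonneg (mul_nonneg hr.1.le (le_of_lt (hx j trivial))) hq.le)

end LaguerreHeat

section PoissonLaguerre

variable {d : ℕ} {α x : Fin d → ℝ} {f : (Fin d → ℝ) → ℝ} {M : ℝ}

/-- The Laguerre heat semigroup at time `-log r`, applied to `f`. -/
noncomputable def laguerreHeat (α : Fin d → ℝ) (f : (Fin d → ℝ) → ℝ) (r : ℝ)
    (x : Fin d → ℝ) : ℝ :=
  ∫ y in posOrthant d, laguerreHeatKernel α r x y * f y

theorem integrableOn_laguerreHeatKernel_mul (hα : ∀ j, -1 < α j) {r : ℝ}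
    (hr : r ∈ Ioo (0 : ℝ) 1) (hx : x ∈ posOrthant d)
    (hf : AEStronglyMeasurable f (volume.restrict (posOrthant d)))
    (hM : ∀ᵐ y ∂volume.restrict (posOrthant d), |f y| ≤ M) :
    IntegrableOn (fun y => laguerreHeatKernel α r x y * f y) (posOrthant d) :=
  (integrableOn_laguerreHeatKernel hα hr hx).mul_bdd hf hM

theorem integral_abs_laguerreHeatKernel_mul_le (hα : ∀ j, -1 < α j) {r : ℝ}
    (hr : r ∈ Ioo (0 : ℝ) 1) (hx : x ∈ posOrthant d)
    (hf : AEStronglyMeasurable f (volume.restrict (posOrthant d)))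
    (hM : ∀ᵐ y ∂volume.restrict (posOrthant d), |f y| ≤ M) :
    ∫ y in posOrthant d, |laguerreHeatKernel α r x y * f y| ≤ M :=
  calc ∫ y in posOrthant d, |laguerreHeatKernel α r x y * f y|
      ≤ ∫ y in posOrthant d, laguerreHeatKernel α r x y * M := by
        refine integral_mono_ae (integrableOn_laguerreHeatKernel_mul hα hr hx hf hM).abs
          ((integrableOn_laguerreHeatKernel hα hr hx).mul_const M) ?_
        filter_upwards [hM] with y hy
        rw [abs_mul, abs_of_nonneg (laguerreHeatKernel_nonneg α r x y)]
        exact mul_le_mul_of_nonneg_left hy (laguerreHeatKernel_nonneg α r x y)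
    _ = M := by rw [integral_mul_const, integral_laguerreHeatKernel hα hr hx, one_mul]

theorem abs_laguerreHeat_le (hα : ∀ j, -1 < α j) {r : ℝ} (hr : r ∈ Ioo (0 : ℝ) 1)
    (hx : x ∈ posOrthant d) (hf : AEStronglyMeasurable f (volume.restrict (posOrthant d)))
    (hM : ∀ᵐ y ∂volume.restrict (posOrthant d), |f y| ≤ M) : |laguerreHeat α f r x| ≤ M :=
  abs_integral_le_integral_abs.trans (integral_abs_laguerreHeatKernel_mul_le hα hr hx hf hM)

theorem aestronglyMeasurable_laguerreHeatKernel_comp_mul {ν : Measure ℝ} {ρ : ℝ → ℝ}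
    (hρ : Measurable ρ) (hf : AEStronglyMeasurable f (volume.restrict (posOrthant d))) :
    AEStronglyMeasurable (Function.uncurry fun v y => laguerreHeatKernel α (ρ v) x y * f y)
      (ν.prod (volume.restrict (posOrthant d))) :=
  ((measurable_laguerreHeatKernel α x).comp
    ((hρ.comp measurable_fst).prodMk measurable_snd)).aestronglyMeasurable.mul hf.comp_snd

theorem plP_eq_integral_laguerreHeat (hα : ∀ j, -1 < α j) (hx : x ∈ posOrthant d)
    (hf : AEStronglyMeasurable f (volume.restrict (posOrthant d)))
    (hM : ∀ᵐ y ∂volume.restrict (posOrthant d), |f y| ≤ M) {t : ℝ} (ht : t ≠ 0) :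
    plP d α t f x = 1 / (2 * √π) *
      ∫ r in Ioo (0 : ℝ) 1, subordinationDensity t r * laguerreHeat α f r x := by
  calc plP d α t f x
      = ∫ y in posOrthant d, 1 / (2 * √π) * ∫ r in Ioo (0 : ℝ) 1,
          subordinationDensity t r * (laguerreHeatKernel α r x y * f y) := by
        rw [plP, if_neg ht]
        refine setIntegral_congr_fun (measurableSet_posOrthant d) fun y hy => ?_
        simp only [plKernel_eq_integral_laguerreHeatKernel hα hx hy, ← mul_assoc,
          integral_mul_const]
    _ = 1 / (2 * √π) * ∫ r in Ioo (0 : ℝ) 1,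
          subordinationDensity t r * laguerreHeat α f r x := by
        rw [integral_const_mul, integral_integral_subordinationDensity_mul_swap
          (aestronglyMeasurable_laguerreHeatKernel_comp_mul (ρ := fun r => r) measurable_id hf)
          (fun r hr => integrableOn_laguerreHeatKernel_mul hα hr hx hf hM)
          (fun r hr => integral_abs_laguerreHeatKernel_mul_le hα hr hx hf hM) ht]
        rfl

/-- The Laguerre heat semigroup applied to `f`, at time `1 / v ^ 2` and the point `x`, as a function
of `v`: the profile whose Gaussian average is the Poisson–Laguerre semigroup. It is complex-valued
so that `gaussianAverage` applies to it. -/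
noncomputable def laguerreHeatProfile (α : Fin d → ℝ) (f : (Fin d → ℝ) → ℝ) (x : Fin d → ℝ)
    (v : ℝ) : ℂ :=
  laguerreHeat α f (exp (-(v ^ 2)⁻¹)) x

theorem aestronglyMeasurable_laguerreHeatProfile {ν : Measure ℝ}
    (hf : AEStronglyMeasurable f (volume.restrict (posOrthant d))) :
    AEStronglyMeasurable (laguerreHeatProfile α f x) ν := by
  have hkernel : AEStronglyMeasurable
      (Function.uncurry fun v y => laguerreHeatKernel α (exp (-(v ^ 2)⁻¹)) x y * f y)
      (ν.prod (volume.restrict (posOrthant d))) :=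
    aestronglyMeasurable_laguerreHeatKernel_comp_mul (by fun_prop) hf
  exact Complex.continuous_ofReal.comp_aestronglyMeasurable hkernel.integral_prod_right'

theorem ae_norm_laguerreHeatProfile_le (hα : ∀ j, -1 < α j) (hx : x ∈ posOrthant d)
    (hf : AEStronglyMeasurable f (volume.restrict (posOrthant d)))
    (hM : ∀ᵐ y ∂volume.restrict (posOrthant d), |f y| ≤ M) :
    ∀ᵐ v ∂volume.restrict (Ioi (0 : ℝ)), ‖laguerreHeatProfile α f x v‖ ≤ M := by
  refine ae_restrict_of_forall_mem measurableSet_Ioi fun v hv => ?_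
  have hr : exp (-(v ^ 2)⁻¹) ∈ Ioo (0 : ℝ) 1 :=
    image_exp_neg_inv_sq_Ioi ▸ mem_image_of_mem _ hv
  rw [laguerreHeatProfile, Complex.norm_real]
  exact abs_laguerreHeat_le hα hr hx hf hM

theorem plP_eq_re_gaussianAverage (hα : ∀ j, -1 < α j) (hx : x ∈ posOrthant d)
    (hf : AEStronglyMeasurable f (volume.restrict (posOrthant d)))
    (hM : ∀ᵐ y ∂volume.restrict (posOrthant d), |f y| ≤ M) {t : ℝ} (ht : t ≠ 0) :
    plP d α t f x = (gaussianAverage (laguerreHeatProfile α f x) t).re := by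
  rw [plP_eq_integral_laguerreHeat hα hx hf hM ht, integral_subordinationDensity_mul]
  unfold laguerreHeatProfile
  rw [re_gaussianAverage_ofReal]
  field_simp

theorem contDiffOn_plP (hα : ∀ j, -1 < α j) (hx : x ∈ posOrthant d)
    (hf : AEStronglyMeasurable f (volume.restrict (posOrthant d)))
    (hM : ∀ᵐ y ∂volume.restrict (posOrthant d), |f y| ≤ M) (n : WithTop ℕ∞) :
    ContDiffOn ℝ n (fun t => plP d α t f x) (Ioi 0) :=
  (contDiffOn_re_gaussianAverage (aestronglyMeasurable_laguerreHeatProfile hf)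
    (ae_norm_laguerreHeatProfile_le hα hx hf hM) n).congr fun _ ht =>
      plP_eq_re_gaussianAverage hα hx hf hM (ne_of_gt ht)

theorem abs_iteratedDeriv_plP_le (hα : ∀ j, -1 < α j) (hx : x ∈ posOrthant d)
    (hf : AEStronglyMeasurable f (volume.restrict (posOrthant d)))
    (hM : ∀ᵐ y ∂volume.restrict (posOrthant d), |f y| ≤ M) (k : ℕ) {t : ℝ} (ht : 0 < t) :
    |iteratedDeriv k (fun s => plP d α s f x) t| ≤ k.factorial * (√2 * M) * 2 ^ k / t ^ k := by
  have heq : EqOn (fun s => plP d α s f x)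
      (fun s : ℝ => (gaussianAverage (laguerreHeatProfile α f x) s).re) (Ioi 0) := fun s hs =>
    plP_eq_re_gaussianAverage hα hx hf hM (ne_of_gt hs)
  rw [heq.iteratedDeriv_of_isOpen isOpen_Ioi k ht, ← div_div_eq_mul_div, ← div_pow]
  exact abs_iteratedDeriv_re_gaussianAverage_le (aestronglyMeasurable_laguerreHeatProfile hf)
    (ae_norm_laguerreHeatProfile_le hα hx hf hM) k ht

end PoissonLaguerre

theorem laguerre_lipschitz_monotone_general (d : ℕ) (α : Fin d → ℝ) (hα : ∀ j, -1 < α j)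
    (β₁ β₂ : ℝ) (hβ₁ : 0 ≤ β₁) (hβ₁₂ : β₁ ≤ β₂) (f : (Fin d → ℝ) → ℝ)
    (hf : AEStronglyMeasurable f (volume.restrict (posOrthant d))) (M : ℝ)
    (hM : ∀ᵐ y ∂volume.restrict (posOrthant d), |f y| ≤ M) (A : ℝ)
    (hA : ∀ t > (0 : ℝ), ∀ x ∈ posOrthant d,
      |iteratedDeriv (⌊β₂⌋₊ + 1) (fun u => plP d α u f x) t| ≤
        A * t ^ (β₂ - ((⌊β₂⌋₊ : ℝ) + 1))) :
    ∃ A' ≥ (0 : ℝ), ∀ t > (0 : ℝ), ∀ x ∈ posOrthant d,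
      |iteratedDeriv (⌊β₁⌋₊ + 1) (fun u => plP d α u f x) t| ≤
        A' * t ^ (β₁ - ((⌊β₁⌋₊ : ℝ) + 1)) := by
  obtain ⟨n, hn⟩ := Nat.exists_eq_add_of_le (Nat.add_le_add_right (Nat.floor_le_floor hβ₁₂) 1)
  have hk : β₁ < (⌊β₁⌋₊ + 1 : ℕ) := by exact_mod_cast Nat.lt_floor_add_one β₁
  simp only [← Nat.cast_add_one, hn] at hA ⊢
  set C : ℕ → ℝ := fun j => j.factorial * (√2 * M) * 2 ^ j
  set k := ⌊β₁⌋₊ + 1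
  refine ⟨|max A (C (k + n)) / ∏ i ∈ Finset.range n, (k + i - β₁)|, abs_nonneg _,
    fun t ht x hx => ?_⟩
  calc |iteratedDeriv k (fun u => plP d α u f x) t|
      ≤ max A (C (k + n)) / (∏ i ∈ Finset.range n, (k + i - β₁)) * t ^ (β₁ - k) :=
        norm_iteratedDeriv_le_rpow_of_le hβ₁ hβ₁₂ hk (contDiffOn_plP hα hx hf hM _)
          (fun j _ s hs => abs_iteratedDeriv_plP_le hα hx hf hM j hs) (fun s hs => hA s hs x hx) ht
    _ ≤ _ := by gcongr; exact le_abs_self _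

theorem laguerre_lipschitz_monotone
    (d : ℕ) (hd : 1 ≤ d) (α : Fin d → ℝ) (hα : ∀ j, -(1 / 2 : ℝ) < α j)
    (β₁ β₂ : ℝ) (hβ₁ : 0 < β₁) (hβ₁₂ : β₁ < β₂)
    (f : (Fin d → ℝ) → ℝ) (hf : Measurable f) (M : ℝ) (hM : ∀ y, |f y| ≤ M)
    (A : ℝ)
    (hA : ∀ t > (0 : ℝ), ∀ x ∈ posOrthant d,
      |iteratedDeriv (⌊β₂⌋₊ + 1) (fun u => plP d α u f x) t| ≤
        A * t ^ (β₂ - ((⌊β₂⌋₊ : ℝ) + 1))) :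
    ∃ A' ≥ (0 : ℝ), ∀ t > (0 : ℝ), ∀ x ∈ posOrthant d,
      |iteratedDeriv (⌊β₁⌋₊ + 1) (fun u => plP d α u f x) t| ≤
        A' * t ^ (β₁ - ((⌊β₁⌋₊ : ℝ) + 1)) := by
  exact laguerre_lipschitz_monotone_general d α (fun j => by linarith [hα j]) β₁ β₂ hβ₁.le hβ₁₂.le
    f hf.aestronglyMeasurable M (Eventually.of_forall hM) A hA
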